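/- For all integers a₀, a₁, a₂ and α = a₀ + a₁r + a₂r² ∈ ℤ[r], and for each i ∈ {1, 2, 3}, the element B_{1i}·r − B_{2i} of ℤ[r] is divisible by α in ℤ[r]; that is, B_{1i}·r ≡ B_{2i} (mod (α)). -/

import Mathlib

open Polynomial

/-- The subring `ℤ[r]` of `K` generated by `r`. -/
noncomputable def Zr {K : Type*} [Field K] (r : K) : Subalgebra ℤ K := Algebra.adjoin ℤ {r}

/-- `r` as an element of `ℤ[r]`. -/
noncomputable def rZ {K : Type*} [Field K] (r : K) : Zr r := ⟨r, Algebra.subset_adjoin rfl⟩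

/-- The discriminant of the cubic `X³ + c₂X² + c₁X + c₀`. -/
def discF (c₀ c₁ c₂ : ℤ) : ℤ :=
  18 * c₂ * c₁ * c₀ - 4 * c₂ ^ 3 * c₀ + c₂ ^ 2 * c₁ ^ 2 - 4 * c₁ ^ 3 - 27 * c₀ ^ 2

/-- The matrix of multiplication by `α = a₀ + a₁r + a₂r²` on `ℚ(r)` in the basis `(1, r, r²)`,
where `r³ + c₂r² + c₁r + c₀ = 0`; its determinant is `N_{K/ℚ}(α)`. -/
def Mmat {R : Type*} [CommRing R] (c₀ c₁ c₂ a₀ a₁ a₂ : R) : Matrix (Fin 3) (Fin 3) R :=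
  !![a₀, -c₀ * a₂, a₂ * c₀ * c₂ - a₁ * c₀;
     a₁, a₀ - c₁ * a₂, a₂ * c₁ * c₂ - a₂ * c₀ - a₁ * c₁;
     a₂, a₁ - c₂ * a₂, a₂ * c₂ ^ 2 - a₂ * c₁ - a₁ * c₂ + a₀]

/-- The `(i+1, j+1)` cofactor of a 3×3 matrix (`cof M i j` with 0-based `i, j` is the
cofactor `B_{(i+1)(j+1)}` in 1-based notation). -/
def cof {R : Type*} [CommRing R] (M : Matrix (Fin 3) (Fin 3) R) (i j : Fin 3) : R :=
  (-1 : R) ^ ((i : ℕ) + (j : ℕ)) * (M.submatrix i.succAbove j.succAbove).det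

/-!
Modulo `α` the row vector `v = (1, r, r²)` is a left null vector of the matrix of multiplication
by `α`. For any square matrix `M`, modulo the entries of `v M` every column of cofactors of `M` is
proportional to `v`: this is Cramer's rule applied to `M` with its `j`-th column replaced by a unit
vector, a replacement that does not change the cofactors along column `j`.
-/

section Cofactors

open Matrix

variable {n R : Type*} [Fintype n] [DecidableEq n] [CommRing R]

theorem adjugate_apply_eq_det_updateCol (M : Matrix n n R) (j i : n) :
    M.adjugate j i = (M.updateCol j (Pi.single i 1)).det := by
  rw [← cramer_apply, cramer_eq_adjugate_mulVec, mulVec_single_one, col_apply]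

theorem adjugate_updateCol_self (M : Matrix n n R) (j i : n) (w : n → R) :
    (M.updateCol j w).adjugate j i = M.adjugate j i := by
  simp only [adjugate_apply_eq_det_updateCol, updateCol_idem]

theorem det_mul_eq_sum_vecMul_mul_adjugate (v : n → R) (M : Matrix n n R) (k : n) :
    M.det * v k = ∑ l, (v ᵥ* M) l * M.adjugate l k := by
  have h : (v ᵥ* M) ᵥ* M.adjugate = M.det • v := by
    rw [vecMul_vecMul, mul_adjugate, vecMul_smul, vecMul_one]
  exact (congrFun h k).symm

theorem dvd_adjugate_mul_sub_adjugate_mul {v : n → R} {M : Matrix n n R} {d : R}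
    (hd : ∀ l, d ∣ (v ᵥ* M) l) (j i k : n) :
    d ∣ M.adjugate j i * v k - M.adjugate j k * v i := by
  set N := M.updateCol j (Pi.single i 1) with hN
  have vecMul_N : v ᵥ* N = Function.update (v ᵥ* M) j (v i) := by
    rw [hN, vecMul_updateCol, dotProduct_single_one]
  have cramer_N : M.adjugate j i * v k - M.adjugate j k * v i =
      ∑ l ∈ Finset.univ.erase j, (v ᵥ* N) l * N.adjugate l k := by
    rw [adjugate_apply_eq_det_updateCol M j i, det_mul_eq_sum_vecMul_mul_adjugate,
      ← Finset.add_sum_erase _ _ (Finset.mem_univ j), ← hN, vecMul_N, Function.update_self,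
      hN, adjugate_updateCol_self]
    ring
  rw [cramer_N]
  refine Finset.dvd_sum fun l hl ↦ Dvd.dvd.mul_right ?_ _
  rw [vecMul_N, Function.update_of_ne (Finset.ne_of_mem_erase hl)]
  exact hd l

end Cofactors

section Cubic

open Matrix

variable {R A : Type*} [CommRing R] [CommRing A]

theorem cof_eq_adjugate (M : Matrix (Fin 3) (Fin 3) R) (i j : Fin 3) :
    cof M i j = M.adjugate j i :=
  (adjugate_fin_succ_eq_det_submatrix M j i).symm

theorem map_cof (φ : R →+* A) (M : Matrix (Fin 3) (Fin 3) R) (i j : Fin 3) :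
    φ (cof M i j) = cof (M.map φ) i j := by
  simp [cof, RingHom.map_det, submatrix_map]

theorem map_Mmat (φ : R →+* A) (c₀ c₁ c₂ a₀ a₁ a₂ : R) :
    (Mmat c₀ c₁ c₂ a₀ a₁ a₂).map φ = Mmat (φ c₀) (φ c₁) (φ c₂) (φ a₀) (φ a₁) (φ a₂) := by
  ext i j
  fin_cases i <;> fin_cases j <;> simp [Mmat]

theorem pow_vecMul_Mmat {c₀ c₁ c₂ x : R} (hx : x ^ 3 + c₂ * x ^ 2 + c₁ * x + c₀ = 0)
    (a₀ a₁ a₂ : R) :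
    (fun i : Fin 3 ↦ x ^ (i : ℕ)) ᵥ* Mmat c₀ c₁ c₂ a₀ a₁ a₂ =
      (a₀ + a₁ * x + a₂ * x ^ 2) • fun i : Fin 3 ↦ x ^ (i : ℕ) := by
  ext j
  have column_eq (M : Matrix (Fin 3) (Fin 3) R) :
      ((fun i : Fin 3 ↦ x ^ (i : ℕ)) ᵥ* M) j = M 0 j + x * M 1 j + x ^ 2 * M 2 j := by
    simp [vecMul, dotProduct, Fin.sum_univ_three]
  rw [column_eq]
  fin_cases j
  · change a₀ + x * a₁ + x ^ 2 * a₂ = (a₀ + a₁ * x + a₂ * x ^ 2) * x ^ 0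
    ring
  · change -c₀ * a₂ + x * (a₀ - c₁ * a₂) + x ^ 2 * (a₁ - c₂ * a₂) =
      (a₀ + a₁ * x + a₂ * x ^ 2) * x ^ 1
    linear_combination -a₂ * hx
  · change (a₂ * c₀ * c₂ - a₁ * c₀) + x * (a₂ * c₁ * c₂ - a₂ * c₀ - a₁ * c₁) +
      x ^ 2 * (a₂ * c₂ ^ 2 - a₂ * c₁ - a₁ * c₂ + a₀) = (a₀ + a₁ * x + a₂ * x ^ 2) * x ^ 2
    linear_combination (a₂ * c₂ - a₁ - a₂ * x) * hx

theorem dvd_cof_Mmat_mul_pow_sub {c₀ c₁ c₂ x : R}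
    (hx : x ^ 3 + c₂ * x ^ 2 + c₁ * x + c₀ = 0) (a₀ a₁ a₂ : R) (i k j : Fin 3) :
    a₀ + a₁ * x + a₂ * x ^ 2 ∣
      cof (Mmat c₀ c₁ c₂ a₀ a₁ a₂) i j * x ^ (k : ℕ) -
        cof (Mmat c₀ c₁ c₂ a₀ a₁ a₂) k j * x ^ (i : ℕ) := by
  simp only [cof_eq_adjugate]
  refine dvd_adjugate_mul_sub_adjugate_mul (v := fun i : Fin 3 ↦ x ^ (i : ℕ)) (fun l ↦ ?_) j i k
  rw [pow_vecMul_Mmat hx]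
  exact dvd_mul_right _ _

end Cubic

theorem stmt_10_general {R A : Type*} [CommRing R] [CommRing A] [Algebra R A] {c₀ c₁ c₂ : R}
    {x : A} (hx : aeval x (X ^ 3 + C c₂ * X ^ 2 + C c₁ * X + C c₀ : R[X]) = 0)
    (a₀ a₁ a₂ : R) (i k j : Fin 3) :
    algebraMap R A a₀ + algebraMap R A a₁ * x + algebraMap R A a₂ * x ^ 2 ∣
      algebraMap R A (cof (Mmat c₀ c₁ c₂ a₀ a₁ a₂) i j) * x ^ (k : ℕ) -
        algebraMap R A (cof (Mmat c₀ c₁ c₂ a₀ a₁ a₂) k j) * x ^ (i : ℕ) := by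
  simp only [map_cof, map_Mmat]
  exact dvd_cof_Mmat_mul_pow_sub (by simpa using hx) _ _ _ i k j

/-- For all integers `a₀, a₁, a₂` and `α = a₀ + a₁r + a₂r² ∈ ℤ[r]`, and for
each `i ∈ {1, 2, 3}`, the element `B_{1i}·r − B_{2i}` of `ℤ[r]` is divisible by `α` in
`ℤ[r]`, i.e. `B_{1i}·r ≡ B_{2i} (mod (α))`. -/
theorem stmt_10 (c₀ c₁ c₂ : ℤ)
    (hf : Irreducible (X ^ 3 + C c₂ * X ^ 2 + C c₁ * X + C c₀ : ℤ[X]))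
    (K : Type*) [Field K] [NumberField K] (r : K)
    (hr : aeval r (X ^ 3 + C c₂ * X ^ 2 + C c₁ * X + C c₀ : ℤ[X]) = 0)
    (hgen : Algebra.adjoin ℚ {r} = ⊤)
    (a₀ a₁ a₂ : ℤ) (j : Fin 3) :
    (a₀ : Zr r) + (a₁ : Zr r) * rZ r + (a₂ : Zr r) * rZ r ^ 2 ∣
      ((cof (Mmat c₀ c₁ c₂ a₀ a₁ a₂) 0 j : ℤ) : Zr r) * rZ r -
        ((cof (Mmat c₀ c₁ c₂ a₀ a₁ a₂) 1 j : ℤ) : Zr r) := by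
  have hx : aeval (rZ r) (X ^ 3 + C c₂ * X ^ 2 + C c₁ * X + C c₀ : ℤ[X]) = 0 :=
    Subtype.ext ((Subalgebra.aeval_coe (Zr r) (rZ r) _).symm.trans hr)
  simpa using stmt_10_general hx a₀ a₁ a₂ 0 1 j
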